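/- Let V be a finite-dimensional irreducible □_q-module of type 1 and diameter d. For i ∈ ℤ/4ℤ and 0 ≤ n ≤ d let V_i(n) denote the eigenspace of the action of x_i on V with eigenvalue q^{d−2n}. Then for every i ∈ ℤ/4ℤ and every 0 ≤ n ≤ d, V_i(n) = (Σ_{m=0}^{n} V_i(m)) ∩ (Σ_{m=0}^{d−n} V_{i+1}(m)). -/

import Mathlib

/-!
Write `x = x_i` and `y = x_{i+1}`. The `q`-Weyl relation `q x y - q⁻¹ y x = q - q⁻¹` forces
`y - θ⁻¹` to map the `θ`-eigenspace of `x` into its `q⁻²θ`-eigenspace. Starting from `V_i(n)`, this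
can be repeated at most `d - n` times before the eigenvalues of `x` run out, and inverting
`y - θ⁻¹` on the eigenspaces of `y` already reached gives `V_i(n) ≤ ∑_{m ≤ d-n} V_{i+1}(m)`.
The relation is invariant under exchanging `x` and `y` along with `q` and `q⁻¹`, so the same
argument gives `V_{i+1}(m) ≤ ∑_{k ≥ d-m} V_i(k)`. By the second inclusion the intersection in
question lies in `(∑_{m ≤ n} V_i(m)) ⊓ (∑_{k ≥ n} V_i(k))`, which is `V_i(n)` because the
eigenspaces of `x` are independent.
-/

noncomputable section

open FreeAlgebra

variable (F : Type) [Field F]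

/-- The defining relations of the algebra `□_q` (Terwilliger), on the free algebra
with generators `x_i`, `i ∈ ℤ/4ℤ`. -/
inductive BoxRel (q : F) : FreeAlgebra F (ZMod 4) → FreeAlgebra F (ZMod 4) → Prop
  | rel1 (i : ZMod 4) : BoxRel q
      (q • (ι F i * ι F (i + 1)) - q⁻¹ • (ι F (i + 1) * ι F i))
      ((q - q⁻¹) • (1 : FreeAlgebra F (ZMod 4)))
  | rel2 (i : ZMod 4) : BoxRel q
      (ι F i ^ 3 * ι F (i + 2) +
        ((q ^ 3 - (q⁻¹) ^ 3) / (q - q⁻¹)) • (ι F i * ι F (i + 2) * ι F i ^ 2))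
      (((q ^ 3 - (q⁻¹) ^ 3) / (q - q⁻¹)) • (ι F i ^ 2 * ι F (i + 2) * ι F i) +
        ι F (i + 2) * ι F i ^ 3)

/-- The algebra `□_q`, presented by generators and relations. -/
abbrev BoxQ (q : F) : Type := RingQuot (BoxRel F q)

/-- The generators `x_i` of `□_q`. -/
def bx (q : F) (i : ZMod 4) : BoxQ F q :=
  RingQuot.mkAlgHom F (BoxRel F q) (ι F i)

/-- `f` acts semisimply: `V` is spanned by the eigenspaces of `f`. -/
def SemisimpleOn {V : Type} [AddCommGroup V] [Module F V] (f : Module.End F V) : Prop :=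
  (⨆ θ : F, Module.End.eigenspace f θ) = ⊤

/-- The set of (distinct) eigenvalues of `f`. -/
def EigSet {V : Type} [AddCommGroup V] [Module F V] (f : Module.End F V) : Set F :=
  {θ : F | Module.End.eigenspace f θ ≠ ⊥}

/-- The representation `π` of `A` on `V` is irreducible. -/
def IsIrrep {A V : Type} [Ring A] [Algebra F A] [AddCommGroup V] [Module F V]
    (π : A →ₐ[F] Module.End F V) : Prop :=
  Nontrivial V ∧ ∀ W : Submodule F V, (∀ a : A, ∀ v ∈ W, π a v ∈ W) → W = ⊥ ∨ W = ⊤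

/-- Isomorphism of representations of `A`. -/
def RepIso {A V W : Type} [Ring A] [Algebra F A] [AddCommGroup V] [Module F V]
    [AddCommGroup W] [Module F W]
    (π : A →ₐ[F] Module.End F V) (π' : A →ₐ[F] Module.End F W) : Prop :=
  ∃ σ : V ≃ₗ[F] W, ∀ (a : A) (v : V), σ (π a v) = π' a (σ v)

/-- The `□_q`-module given by `π` has type `1` and diameter `d`: each generator `x_i`
acts semisimply with set of distinct eigenvalues `{q^(d-2n) : 0 ≤ n ≤ d}`. -/
def Type1Diam (q : F) {V : Type} [AddCommGroup V] [Module F V]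
    (π : BoxQ F q →ₐ[F] Module.End F V) (d : ℕ) : Prop :=
  ∀ i : ZMod 4, SemisimpleOn F (π (bx F q i)) ∧
    EigSet F (π (bx F q i)) =
      {θ : F | ∃ n : ℕ, n ≤ d ∧ θ = q ^ ((d : ℤ) - 2 * (n : ℤ))}

open Module (End)
open Module.End (mem_eigenspace_iff)

lemma biSup_inf_biSup_of_iSupIndep {ι α : Type*} [CompleteLattice α] [IsModularLattice α]
    [IsCompactlyGenerated α] {f : ι → α} (hf : iSupIndep f) (s t : Set ι) :
    (⨆ i ∈ s, f i) ⊓ (⨆ i ∈ t, f i) = ⨆ i ∈ s ∩ t, f i := by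
  have hle : (⨆ i ∈ s ∩ t, f i) ≤ ⨆ i ∈ t, f i := biSup_mono fun _ hi => hi.2
  have hdisj : Disjoint (⨆ i ∈ s \ t, f i) (⨆ i ∈ t, f i) :=
    hf.disjoint_biSup_biSup Set.disjoint_sdiff_left
  calc (⨆ i ∈ s, f i) ⊓ (⨆ i ∈ t, f i)
      = ((⨆ i ∈ s ∩ t, f i) ⊔ ⨆ i ∈ s \ t, f i) ⊓ ⨆ i ∈ t, f i := by
        rw [← iSup_union, Set.inter_union_sdiff]
    _ = (⨆ i ∈ s ∩ t, f i) ⊔ (⨆ i ∈ s \ t, f i) ⊓ ⨆ i ∈ t, f i := sup_inf_assoc_of_le _ hle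
    _ = ⨆ i ∈ s ∩ t, f i := by rw [hdisj.eq_bot, sup_bot_eq]

section Eigenspaces

variable {K V : Type*} [Field K] [AddCommGroup V] [Module K V]

lemma biSup_eigenspace_inf_biSup_eigenspace {ι : Type*} (f : End K V) {a : ι → K} {s t u : Set ι}
    (ha : u.InjOn a) (hs : s ⊆ u) (ht : t ⊆ u) :
    (⨆ i ∈ s, f.eigenspace (a i)) ⊓ (⨆ i ∈ t, f.eigenspace (a i)) =
      ⨆ i ∈ s ∩ t, f.eigenspace (a i) := by
  simp only [← iSup_image (f := a) (g := f.eigenspace), ha.image_inter hs ht]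
  exact biSup_inf_biSup_of_iSupIndep f.eigenspaces_iSupIndep _ _

lemma biSup_eigenspace_le_map_sub_smul {ι : Type*} (f : End K V) {a : ι → K} {s : Set ι} {c : K}
    (hc : ∀ i ∈ s, a i ≠ c) :
    ⨆ i ∈ s, f.eigenspace (a i) ≤
      (⨆ i ∈ s, f.eigenspace (a i)).map (f - c • (1 : End K V)) := by
  refine iSup₂_le fun i hi v hv => ⟨(a i - c)⁻¹ • v, Submodule.smul_mem _ _ ?_, ?_⟩
  · exact le_biSup (fun i => f.eigenspace (a i)) hi hv
  · rw [map_smul, LinearMap.sub_apply, mem_eigenspace_iff.mp hv, LinearMap.smul_apply,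
      End.one_apply, ← sub_smul, inv_smul_smul₀ (sub_ne_zero.mpr (hc i hi))]

lemma eigenspace_le_biSup_eigenspace_of_chain {f g : End K V} {a b : ℕ → K}
    (hzero : f.eigenspace (a 0) ≤ g.eigenspace (b 0))
    (hsucc : ∀ k, ∀ v ∈ f.eigenspace (a (k + 1)), g v - b (k + 1) • v ∈ f.eigenspace (a k))
    {k : ℕ} (hb : (Set.Iic k).InjOn b) :
    f.eigenspace (a k) ≤ ⨆ m ∈ Set.Iic k, g.eigenspace (b m) := by
  induction k with
  | zero => exact hzero.trans (le_biSup (fun m => g.eigenspace (b m)) Set.self_mem_Iic)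
  | succ k ih =>
    intro v hv
    have hsub : Set.Iic k ⊆ Set.Iic (k + 1) := Set.Iic_subset_Iic.mpr k.le_succ
    have hne : ∀ m ∈ Set.Iic k, b m ≠ b (k + 1) := fun m hm h =>
      (Nat.lt_succ_of_le hm).ne (hb (hsub hm) Set.self_mem_Iic h)
    obtain ⟨u, hu, huv⟩ :=
      biSup_eigenspace_le_map_sub_smul g hne (ih (hb.mono hsub) (hsucc k v hv))
    have hvu : v - u ∈ g.eigenspace (b (k + 1)) := by
      rw [mem_eigenspace_iff, map_sub, smul_sub, sub_eq_sub_iff_sub_eq_sub]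
      exact huv.symm
    rw [← sub_add_cancel v u]
    exact add_mem (le_biSup (fun m => g.eigenspace (b m)) Set.self_mem_Iic hvu)
      (biSup_mono (f := fun m => g.eigenspace (b m)) hsub hu)

end Eigenspaces

section QWeyl

variable {K A V : Type*} [Field K] [Ring A] [Algebra K A] [AddCommGroup V] [Module K V] {q : K}

/-- The `q`-Weyl relation `(q x y - q⁻¹ y x) / (q - q⁻¹) = 1` between consecutive generators of
`□_q`, with the denominator cleared. -/
def IsQWeylPair (q : K) (x y : A) : Prop :=
  q • (x * y) - q⁻¹ • (y * x) = (q - q⁻¹) • (1 : A)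

/-- The eigenvalue `q^(d-2n)` of a generator of `□_q` on the eigenspace `V_i(n)` of a module of
type `1` and diameter `d`. -/
def typeOneEigenvalue (q : K) (d n : ℕ) : K :=
  q ^ ((d : ℤ) - 2 * (n : ℤ))

lemma typeOneEigenvalue_ne_zero (hq0 : q ≠ 0) (d n : ℕ) : typeOneEigenvalue q d n ≠ 0 :=
  zpow_ne_zero _ hq0

lemma typeOneEigenvalue_add_one (hq0 : q ≠ 0) (d n : ℕ) :
    typeOneEigenvalue q d (n + 1) = typeOneEigenvalue q d n / q ^ 2 := by
  rw [typeOneEigenvalue, typeOneEigenvalue, ← zpow_natCast q 2, ← zpow_sub₀ hq0]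
  congr 1
  push_cast
  ring

lemma inv_typeOneEigenvalue {d n : ℕ} (hn : n ≤ d) :
    (typeOneEigenvalue q d n)⁻¹ = typeOneEigenvalue q d (d - n) := by
  rw [typeOneEigenvalue, typeOneEigenvalue, ← zpow_neg]
  congr 1
  omega

lemma IsQWeylPair.symm {x y : A} (h : IsQWeylPair q x y) : IsQWeylPair q⁻¹ y x := by
  rw [IsQWeylPair, inv_inv, ← neg_sub, h, ← neg_smul, neg_sub]

lemma IsQWeylPair.map {B : Type*} [Ring B] [Algebra K B] {x y : A} (h : IsQWeylPair q x y)
    (φ : A →ₐ[K] B) : IsQWeylPair q (φ x) (φ y) := by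
  simpa only [IsQWeylPair, map_sub, map_smul, map_mul, map_one] using congrArg φ h

variable {x y : End K V}

lemma IsQWeylPair.sub_inv_smul_mem_eigenspace (h : IsQWeylPair q x y) (hq0 : q ≠ 0) {θ : K}
    (hθ : θ ≠ 0) {v : V} (hv : v ∈ x.eigenspace θ) :
    y v - θ⁻¹ • v ∈ x.eigenspace (θ / q ^ 2) := by
  rw [mem_eigenspace_iff] at hv ⊢
  have hrel : q • x (y v) - q⁻¹ • θ • y v = (q - q⁻¹) • v := by
    simpa [hv] using LinearMap.congr_fun h v
  have hxy : x (y v) = q⁻¹ • ((q - q⁻¹) • v + q⁻¹ • θ • y v) := by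
    rw [← hrel, sub_add_cancel, inv_smul_smul₀ hq0]
  rw [map_sub, map_smul, hv, hxy]
  match_scalars <;> field_simp
  ring

lemma IsQWeylPair.eigenspace_le_biSup_eigenspace_inv (h : IsQWeylPair q x y) (hq0 : q ≠ 0)
    {a : ℕ → K} (ha0 : ∀ k, a k ≠ 0) (ha : ∀ k, a (k + 1) / q ^ 2 = a k)
    (hx : ¬ x.HasEigenvalue (a 0 / q ^ 2)) {k : ℕ} (hinj : (Set.Iic k).InjOn a) :
    x.eigenspace (a k) ≤ ⨆ m ∈ Set.Iic k, y.eigenspace (a m)⁻¹ := by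
  have hstep : ∀ k, ∀ v ∈ x.eigenspace (a k), y v - (a k)⁻¹ • v ∈ x.eigenspace (a k / q ^ 2) :=
    fun k _ hv => h.sub_inv_smul_mem_eigenspace hq0 (ha0 k) hv
  have hbot : x.eigenspace (a 0 / q ^ 2) = ⊥ := not_not.mp hx
  refine eigenspace_le_biSup_eigenspace_of_chain (fun v hv => ?_) (fun k v hv => ?_)
    (inv_injective.comp_injOn hinj)
  · have := hstep 0 v hv
    rw [hbot, Submodule.mem_bot, sub_eq_zero] at this
    exact mem_eigenspace_iff.mpr this
  · exact ha k ▸ hstep (k + 1) v hv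

variable {d n : ℕ}

lemma IsQWeylPair.eigenspace_left_le (h : IsQWeylPair q x y) (hq0 : q ≠ 0)
    (hinj : (Set.Iic d).InjOn (typeOneEigenvalue q d))
    (hx : ¬ x.HasEigenvalue (q ^ (-(d : ℤ) - 2))) (hn : n ≤ d) :
    x.eigenspace (typeOneEigenvalue q d n) ≤
      ⨆ m ∈ Set.Iic (d - n), y.eigenspace (typeOneEigenvalue q d m) := by
  have hfirst : (typeOneEigenvalue q d 0)⁻¹ / q ^ 2 = q ^ (-(d : ℤ) - 2) := by
    simp [typeOneEigenvalue, zpow_sub₀ hq0]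
  have hle := h.eigenspace_le_biSup_eigenspace_inv hq0 (a := fun m => (typeOneEigenvalue q d m)⁻¹)
    (k := d - n) (fun m => inv_ne_zero (typeOneEigenvalue_ne_zero hq0 d m))
    (fun m => by rw [typeOneEigenvalue_add_one hq0]; field_simp) (hfirst ▸ hx)
    (inv_injective.comp_injOn (hinj.mono (Set.Iic_subset_Iic.mpr (d.sub_le n))))
  simpa only [inv_inv, inv_typeOneEigenvalue (d.sub_le n), Nat.sub_sub_self hn] using hle

lemma IsQWeylPair.biSup_eigenspace_right_le (h : IsQWeylPair q x y) (hq0 : q ≠ 0)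
    (hinj : (Set.Iic d).InjOn (typeOneEigenvalue q d))
    (hy : ¬ y.HasEigenvalue (q ^ ((d : ℤ) + 2))) (hn : n ≤ d) :
    ⨆ m ∈ Set.Iic (d - n), y.eigenspace (typeOneEigenvalue q d m) ≤
      ⨆ k ∈ Set.Icc n d, x.eigenspace (typeOneEigenvalue q d k) := by
  have hfirst : typeOneEigenvalue q d 0 / q⁻¹ ^ 2 = q ^ ((d : ℤ) + 2) := by
    simp [typeOneEigenvalue, zpow_add₀ hq0]
  refine iSup₂_le fun m (hm : m ≤ d - n) => ?_
  have hmd : m ≤ d := hm.trans (d.sub_le n)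
  refine (h.symm.eigenspace_le_biSup_eigenspace_inv (inv_ne_zero hq0)
    (typeOneEigenvalue_ne_zero hq0 d)
    (fun m => by rw [typeOneEigenvalue_add_one hq0]; field_simp) (hfirst ▸ hy)
    (hinj.mono (Set.Iic_subset_Iic.mpr hmd))).trans (iSup₂_le fun k (hk : k ≤ m) => ?_)
  rw [inv_typeOneEigenvalue (hk.trans hmd)]
  have hmem : d - k ∈ Set.Icc n d := ⟨by omega, d.sub_le k⟩
  exact le_biSup (fun k => x.eigenspace (typeOneEigenvalue q d k)) hmem

theorem stmt8_general (h : IsQWeylPair q x y) (hq0 : q ≠ 0)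
    (hinj : (Set.Iic d).InjOn fun m : ℕ => q ^ ((d : ℤ) - 2 * (m : ℤ)))
    (hx : ¬ x.HasEigenvalue (q ^ (-(d : ℤ) - 2))) (hy : ¬ y.HasEigenvalue (q ^ ((d : ℤ) + 2)))
    (hn : n ≤ d) :
    x.eigenspace (q ^ ((d : ℤ) - 2 * (n : ℤ))) =
      (⨆ m : ℕ, ⨆ _ : m ≤ n, x.eigenspace (q ^ ((d : ℤ) - 2 * (m : ℤ)))) ⊓
      (⨆ m : ℕ, ⨆ _ : m ≤ d - n, y.eigenspace (q ^ ((d : ℤ) - 2 * (m : ℤ)))) := by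
  let E : ℕ → Submodule K V := fun m => x.eigenspace (typeOneEigenvalue q d m)
  have hmeet : Set.Iic n ∩ Set.Icc n d = {n} := by
    ext m
    simp only [Set.mem_inter_iff, Set.mem_Iic, Set.mem_Icc, Set.mem_singleton_iff]
    omega
  refine le_antisymm
    (le_inf (le_biSup E Set.self_mem_Iic) (h.eigenspace_left_le hq0 hinj hx hn)) ?_
  calc _ ≤ (⨆ m ∈ Set.Iic n, E m) ⊓ ⨆ m ∈ Set.Icc n d, E m :=
        inf_le_inf_left _ (h.biSup_eigenspace_right_le hq0 hinj hy hn)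
    _ = ⨆ m ∈ Set.Iic n ∩ Set.Icc n d, E m :=
        biSup_eigenspace_inf_biSup_eigenspace x hinj (Set.Iic_subset_Iic.mpr hn)
          Set.Icc_subset_Iic_self
    _ = E n := by rw [hmeet, iSup_singleton]

end QWeyl

section BoxModules

lemma zpow_injective_of_pow_ne_one {G : Type*} [GroupWithZero G] {q : G} (hq0 : q ≠ 0)
    (hq1 : ∀ n : ℕ, 0 < n → q ^ n ≠ 1) : Function.Injective fun n : ℤ => q ^ n := by
  have hfin : ¬ IsOfFinOrder (Units.mk0 q hq0) := by
    rw [← Units.isOfFinOrder_val, Units.val_mk0, isOfFinOrder_iff_pow_eq_one]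
    exact fun ⟨n, hn, h⟩ => hq1 n hn h
  intro m n h
  exact injective_zpow_iff_not_isOfFinOrder.mpr hfin (Units.ext (by simpa using h))

variable {F}

lemma isQWeylPair_bx (q : F) (i : ZMod 4) : IsQWeylPair q (bx F q i) (bx F q (i + 1)) := by
  simpa only [IsQWeylPair, bx, map_sub, map_smul, map_mul, map_one] using
    RingQuot.mkAlgHom_rel F (BoxRel.rel1 (q := q) i)

lemma Type1Diam.not_hasEigenvalue {q : F} {V : Type} [AddCommGroup V] [Module F V]
    {π : BoxQ F q →ₐ[F] End F V} {d : ℕ} (hT : Type1Diam F q π d)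
    (hinj : Function.Injective fun n : ℤ => q ^ n) (i : ZMod 4) {e : ℤ}
    (he : ∀ n : ℕ, n ≤ d → e ≠ (d : ℤ) - 2 * (n : ℤ)) :
    ¬ (π (bx F q i)).HasEigenvalue (q ^ e) := by
  intro h
  obtain ⟨n, hn, hqe⟩ : q ^ e ∈ {θ : F | ∃ n : ℕ, n ≤ d ∧ θ = q ^ ((d : ℤ) - 2 * (n : ℤ))} :=
    (hT i).2 ▸ h
  exact he n hn (hinj hqe)

end BoxModules

/-- For a type-1 irreducible `□_q`-module of diameter `d`, the `n`-th eigenspace of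
`x_i` equals the intersection of the `n`-th component of the flag `[i]` and the
`(d-n)`-th component of the flag `[i+1]`. -/
theorem stmt8 [IsAlgClosed F] [CharZero F] (q : F) (hq0 : q ≠ 0)
    (hq1 : ∀ n : ℕ, 0 < n → q ^ n ≠ 1)
    (V : Type) [AddCommGroup V] [Module F V] [FiniteDimensional F V]
    (π : BoxQ F q →ₐ[F] Module.End F V) (hirr : IsIrrep F π)
    (d : ℕ) (hT : Type1Diam F q π d) :
    ∀ i : ZMod 4, ∀ n : ℕ, n ≤ d →
      Module.End.eigenspace (π (bx F q i)) (q ^ ((d : ℤ) - 2 * (n : ℤ))) =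
      (⨆ m : ℕ, ⨆ _ : m ≤ n,
          Module.End.eigenspace (π (bx F q i)) (q ^ ((d : ℤ) - 2 * (m : ℤ)))) ⊓
      (⨆ m : ℕ, ⨆ _ : m ≤ d - n,
          Module.End.eigenspace (π (bx F q (i + 1))) (q ^ ((d : ℤ) - 2 * (m : ℤ)))) := by
  intro i n hn
  have hinj := zpow_injective_of_pow_ne_one hq0 hq1
  exact stmt8_general ((isQWeylPair_bx q i).map π) hq0 (fun m _ m' _ h => by have := hinj h; omega)
    (hT.not_hasEigenvalue hinj i (by omega)) (hT.not_hasEigenvalue hinj (i + 1) (by omega)) hn
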